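/- arXiv:2011.01286 — 5 statements merged into one kernel-verified Lean document; each statement's English description precedes it below -/
import Mathlib

section
/- A (2,2,2) probability table P is classical if and only if P is a convex combination of finitely many probability tables that are each deterministic and non-signalling; that is, there exist finitely many deterministic non-signalling probability tables P_1, ..., P_n and weights p_1, ..., p_n ≥ 0 with Σ_i p_i = 1 such that P = Σ_i p_i P_i. -/
/-- A (2,2,2) probability table: inputs `x y : Bool`, outcomes `a b : Bool`
(`true` denotes `+1`, `false` denotes `-1`), with nonnegative entries that sum to one
for every choice of inputs. -/
def IsProbTable (P : Bool → Bool → Bool → Bool → ℝ) : Prop :=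
  (∀ a b x y, 0 ≤ P a b x y) ∧ ∀ x y, ∑ a : Bool, ∑ b : Bool, P a b x y = 1

/-- A probability table is classical if it admits a local hidden-variable model. -/
def IsClassical (P : Bool → Bool → Bool → Bool → ℝ) : Prop :=
  ∃ (n : ℕ), 0 < n ∧
    ∃ (q : Fin n → ℝ) (PA : Bool → Bool → Fin n → ℝ) (PB : Bool → Bool → Fin n → ℝ),
      (∀ l, 0 ≤ q l) ∧ (∑ l, q l) = 1 ∧
      (∀ a x l, 0 ≤ PA a x l) ∧ (∀ x l, ∑ a : Bool, PA a x l = 1) ∧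
      (∀ b y l, 0 ≤ PB b y l) ∧ (∀ y l, ∑ b : Bool, PB b y l = 1) ∧
      (∀ a b x y, P a b x y = ∑ l, q l * PA a x l * PB b y l)

/-- A probability table is deterministic if every entry is 0 or 1. -/
def IsDeterministic (P : Bool → Bool → Bool → Bool → ℝ) : Prop :=
  ∀ a b x y, P a b x y = 0 ∨ P a b x y = 1

/-- A probability table is non-signalling if Alice's marginal does not depend on Bob's
input and vice versa. -/
def IsNonSignalling (P : Bool → Bool → Bool → Bool → ℝ) : Prop :=
  (∀ a x y y', ∑ b : Bool, P a b x y = ∑ b : Bool, P a b x y') ∧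
  (∀ b y x x', ∑ a : Bool, P a b x y = ∑ a : Bool, P a b x' y)

/-- A deterministic non-signalling table is the product of its marginals. -/
lemma det_factor (Q : Bool → Bool → Bool → Bool → ℝ) (h1 : IsProbTable Q)
    (h2 : IsDeterministic Q) (h3 : IsNonSignalling Q) (a b x y : Bool) :
    Q a b x y = (∑ b' : Bool, Q a b' x false) * (∑ a' : Bool, Q a' b false y) := by
  rw [h3.1 a x false y, h3.2 b y false x]
  have hs := h1.2 x y
  simp only [Fintype.sum_bool] at hs ⊢
  rcases h2 true true x y with h | h <;> rcases h2 true false x y with k2 | k2 <;>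
  rcases h2 false true x y with k3 | k3 <;> rcases h2 false false x y with k4 | k4 <;>
  rw [h, k2, k3, k4] at hs <;> norm_num at hs <;>
  cases a <;> cases b <;> simp [h, k2, k3, k4]

/-- The deterministic local table given by the response functions of Alice and Bob. -/
noncomputable def detTable (t : (Bool × Bool) × (Bool × Bool)) (a b x y : Bool) : ℝ :=
  (if (cond x t.1.1 t.1.2) = a then 1 else 0) * (if (cond y t.2.1 t.2.2) = b then 1 else 0)

lemma detTable_spec (t : (Bool × Bool) × (Bool × Bool)) :
    IsProbTable (detTable t) ∧ IsDeterministic (detTable t) ∧ IsNonSignalling (detTable t) := by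
  refine ⟨⟨?_, ?_⟩, ?_, ?_, ?_⟩
  · intro a b x y
    unfold detTable
    positivity
  · intro x y
    simp only [detTable, ← Finset.mul_sum, Finset.sum_ite_eq, Finset.mem_univ, if_true, mul_one]
  · intro a b x y
    unfold detTable
    split_ifs <;> simp
  · intro a x y y'
    simp only [detTable, ← Finset.mul_sum, Finset.sum_ite_eq, Finset.mem_univ, if_true, mul_one]
  · intro b y x x'
    simp only [detTable, ← Finset.sum_mul, Finset.sum_ite_eq, Finset.mem_univ, if_true, mul_one]

lemma response_sum (f : Bool → Bool → ℝ) (hf : ∀ x, ∑ a : Bool, f a x = 1) (a x : Bool) :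
    ∑ t : Bool × Bool, f t.1 true * f t.2 false * (if (cond x t.1 t.2) = a then 1 else 0)
      = f a x := by
  have h1 := hf true
  have h2 := hf false
  simp only [Fintype.sum_bool] at h1 h2
  have h1' := eq_sub_of_add_eq h1
  have h2' := eq_sub_of_add_eq h2
  cases a <;> cases x <;> simp [Fintype.sum_prod_type, h1', h2'] <;> ring

/-- A (2,2,2) probability table is classical if and only if it is a finite
convex combination of deterministic non-signalling probability tables. -/
theorem classical_iff_convex_combination_of_deterministic_nonsignalling
    (P : Bool → Bool → Bool → Bool → ℝ) (hP : IsProbTable P) :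
    IsClassical P ↔
      ∃ (n : ℕ), 0 < n ∧
        ∃ (p : Fin n → ℝ) (Q : Fin n → Bool → Bool → Bool → Bool → ℝ),
          (∀ i, 0 ≤ p i) ∧ (∑ i, p i) = 1 ∧
          (∀ i, IsProbTable (Q i) ∧ IsDeterministic (Q i) ∧ IsNonSignalling (Q i)) ∧
          (∀ a b x y, P a b x y = ∑ i, p i * Q i a b x y) := by
  constructor
  · rintro ⟨n, -, q, PA, PB, hq, hq1, hA, hA1, hB, hB1, h⟩
    let T := (Bool × Bool) × (Bool × Bool)
    let e : Fin (Fintype.card T) ≃ T := (Fintype.equivFin T).symm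
    let w : T → ℝ := fun t => ∑ l, q l *
      ((PA t.1.1 true l * PA t.1.2 false l) * (PB t.2.1 true l * PB t.2.2 false l))
    have key : ∀ a b x y, P a b x y = ∑ t : T, w t * detTable t a b x y := by
      intro a b x y
      rw [h]
      simp only [w, Finset.sum_mul]
      rw [Finset.sum_comm]
      refine Finset.sum_congr rfl fun l _ => ?_
      rw [← response_sum (fun a x => PA a x l) (fun x => hA1 x l) a x,
        ← response_sum (fun b y => PB b y l) (fun y => hB1 y l) b y, mul_assoc,
        Finset.sum_mul_sum, ← Fintype.sum_prod_type', Finset.mul_sum]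
      refine Finset.sum_congr rfl fun t _ => ?_
      unfold detTable
      ring
    refine ⟨Fintype.card T, Fintype.card_pos, fun i => w (e i), fun i => detTable (e i),
      ?_, ?_, fun i => detTable_spec _, ?_⟩
    · intro i
      refine Finset.sum_nonneg fun l _ => ?_
      exact mul_nonneg (hq l) (mul_nonneg (mul_nonneg (hA _ _ _) (hA _ _ _))
        (mul_nonneg (hB _ _ _) (hB _ _ _)))
    · rw [Equiv.sum_comp e w]
      have h1 := hP.2 true true
      simp only [key] at h1
      rw [← h1]
      simp only [← Finset.sum_comm (s := (Finset.univ : Finset T)), ← Finset.mul_sum]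
      refine Finset.sum_congr rfl fun t _ => ?_
      rw [(detTable_spec t).1.2, mul_one]
    · intro a b x y
      rw [key, ← Equiv.sum_comp e]
  · rintro ⟨n, hn, p, Q, hp, hp1, hQ, h⟩
    refine ⟨n, hn, p, fun a x i => ∑ b : Bool, Q i a b x false,
      fun b y i => ∑ a : Bool, Q i a b false y, hp, hp1, ?_, ?_, ?_, ?_, ?_⟩
    · exact fun a x i => Finset.sum_nonneg fun b _ => (hQ i).1.1 _ _ _ _
    · exact fun x i => (hQ i).1.2 _ _
    · exact fun a x i => Finset.sum_nonneg fun b _ => (hQ i).1.1 _ _ _ _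
    · intro y i
      rw [Finset.sum_comm]
      exact (hQ i).1.2 _ _
    · intro a b x y
      rw [h]
      refine Finset.sum_congr rfl fun i _ => ?_
      rw [det_factor (Q i) (hQ i).1 (hQ i).2.1 (hQ i).2.2 a b x y, mul_assoc]
end

section
/- The CHSH Bell inequality: for every classical (2,2,2) probability table P, the CHSH value satisfies −2 ≤ E(P) ≤ 2. -/
/-- The outcome value: `true` denotes `+1`, `false` denotes `-1`. -/
noncomputable def sgn (a : Bool) : ℝ := if a then 1 else -1

/-- The correlator `E_{x,y}(P) = ∑_{a,b} a·b·P(a,b|x,y)`. -/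
noncomputable def correlator (P : Bool → Bool → Bool → Bool → ℝ) (x y : Bool) : ℝ :=
  ∑ a : Bool, ∑ b : Bool, sgn a * sgn b * P a b x y

/-- The CHSH value `E(P) = E_{0,0} + E_{0,1} + E_{1,0} − E_{1,1}`. -/
noncomputable def chsh (P : Bool → Bool → Bool → Bool → ℝ) : ℝ :=
  correlator P false false + correlator P false true +
    correlator P true false - correlator P true true

theorem chsh_aux (s t u v : ℝ) (hs : |s| ≤ 1) (ht : |t| ≤ 1) (hu : |u| ≤ 1) (hv : |v| ≤ 1) :
    |s * u + s * v + t * u - t * v| ≤ 2 := by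
  have h1 : |s * (u + v)| ≤ |u + v| := by
    rw [abs_mul]; exact mul_le_of_le_one_left (abs_nonneg _) hs
  have h2 : |t * (u - v)| ≤ |u - v| := by
    rw [abs_mul]; exact mul_le_of_le_one_left (abs_nonneg _) ht
  have h3 : |u + v| + |u - v| ≤ 2 := by
    rw [abs_le] at hu hv
    rcases abs_cases (u + v) with h | h <;> rcases abs_cases (u - v) with h' | h' <;> linarith
  have h4 : s * u + s * v + t * u - t * v = s * (u + v) + t * (u - v) := by ring
  rw [h4]
  linarith [abs_add_le (s * (u + v)) (t * (u - v))]

/-- the CHSH Bell inequality `−2 ≤ E(P) ≤ 2` for classical tables. -/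
theorem chsh_inequality_classical
    (P : Bool → Bool → Bool → Bool → ℝ) (hP : IsProbTable P)
    (hC : IsClassical P) : -2 ≤ chsh P ∧ chsh P ≤ 2 := by
  obtain ⟨n, -, q, PA, PB, hq, hq1, hA, hA1, hB, hB1, h⟩ := hC
  have key : ∀ l, |(PA true false l - PA false false l) * (PB true false l - PB false false l)
      + (PA true false l - PA false false l) * (PB true true l - PB false true l)
      + (PA true true l - PA false true l) * (PB true false l - PB false false l)
      - (PA true true l - PA false true l) * (PB true true l - PB false true l)| ≤ 2 := by
    intro l
    have bA : ∀ x, |PA true x l - PA false x l| ≤ 1 := by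
      intro x
      have h1 := hA1 x l
      rw [Fintype.sum_bool] at h1
      rw [abs_le]
      constructor <;> linarith [hA true x l, hA false x l]
    have bB : ∀ x, |PB true x l - PB false x l| ≤ 1 := by
      intro x
      have h1 := hB1 x l
      rw [Fintype.sum_bool] at h1
      rw [abs_le]
      constructor <;> linarith [hB true x l, hB false x l]
    exact chsh_aux _ _ _ _ (bA _) (bA _) (bB _) (bB _)
  have hE : chsh P = ∑ l, q l *
      ((PA true false l - PA false false l) * (PB true false l - PB false false l)
      + (PA true false l - PA false false l) * (PB true true l - PB false true l)
      + (PA true true l - PA false true l) * (PB true false l - PB false false l)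
      - (PA true true l - PA false true l) * (PB true true l - PB false true l)) := by
    simp only [chsh, correlator, Fintype.sum_bool, h, sgn, Finset.mul_sum,
      ← Finset.sum_add_distrib, ← Finset.sum_sub_distrib]
    refine Finset.sum_congr rfl fun l _ => ?_
    simp only [if_true, Bool.false_eq_true, if_false]
    ring
  have h2 : ∑ l, q l * 2 = 2 := by rw [← Finset.sum_mul, hq1, one_mul]
  have h3 : ∑ l, q l * (-2) = -2 := by rw [← Finset.sum_mul, hq1, one_mul]
  rw [hE]
  constructor
  · rw [← h3]
    exact Finset.sum_le_sum fun l _ => mul_le_mul_of_nonneg_left (abs_le.1 (key l)).1 (hq l)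
  · calc _ ≤ ∑ l, q l * 2 := Finset.sum_le_sum fun l _ =>
          mul_le_mul_of_nonneg_left (abs_le.1 (key l)).2 (hq l)
      _ = 2 := h2
end

section
/- The Tsirelson bound: for every quantum (2,2,2) probability table P, the CHSH value satisfies E(P) ≤ 2√2. -/
open Kronecker
open scoped ComplexOrder

/-- A probability table is quantum if it arises from local POVM measurements on a
bipartite quantum state. -/
def IsQuantum (P : Bool → Bool → Bool → Bool → ℝ) : Prop :=
  ∃ (dA dB : ℕ), 1 ≤ dA ∧ 1 ≤ dB ∧
    ∃ (ρ : Matrix (Fin dA × Fin dB) (Fin dA × Fin dB) ℂ)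
      (E : Bool → Bool → Matrix (Fin dA) (Fin dA) ℂ)
      (F : Bool → Bool → Matrix (Fin dB) (Fin dB) ℂ),
      ρ.PosSemidef ∧ ρ.trace = 1 ∧
      (∀ x a, (E x a).PosSemidef) ∧ (∀ x, E x false + E x true = 1) ∧
      (∀ y b, (F y b).PosSemidef) ∧ (∀ y, F y false + F y true = 1) ∧
      (∀ a b x y, (P a b x y : ℂ) = (ρ * (E x a ⊗ₖ F y b)).trace)

theorem sub_kronecker_aux {m n : Type*} (A A' : Matrix m m ℂ) (B : Matrix n n ℂ) :
    (A - A') ⊗ₖ B = A ⊗ₖ B - A' ⊗ₖ B := by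
  ext i j
  simp [Matrix.kroneckerMap_apply, sub_mul]

theorem kronecker_sub_aux {m n : Type*} (A : Matrix m m ℂ) (B B' : Matrix n n ℂ) :
    A ⊗ₖ (B - B') = A ⊗ₖ B - A ⊗ₖ B' := by
  ext i j
  simp [Matrix.kroneckerMap_apply, mul_sub]

theorem trace_mul_nonneg_aux {n : Type*} [Fintype n] [DecidableEq n] {ρ M : Matrix n n ℂ}
    (hρ : ρ.PosSemidef) (hM : M.PosSemidef) : 0 ≤ (ρ * M).trace.re := by
  obtain ⟨B, hB⟩ : ∃ B : Matrix n n ℂ, M = B.conjTranspose * B := by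
    open scoped MatrixOrder Matrix.Norms.L2Operator in
    exact CStarAlgebra.nonneg_iff_eq_star_mul_self.mp hM.nonneg
  subst hB
  have h := (hρ.mul_mul_conjTranspose_same B).trace_nonneg
  rw [Matrix.trace_mul_cycle, Matrix.trace_mul_comm] at h
  exact (Complex.le_def.mp h).1

/-- The real functional `M ↦ Re tr(ρ M)`. -/
noncomputable def stateFun {n : Type*} [Fintype n] (ρ : Matrix n n ℂ) :
    Matrix n n ℂ →ₗ[ℝ] ℝ where
  toFun M := (ρ * M).trace.re
  map_add' := by intro x y; simp [mul_add]
  map_smul' := by intro r x; simp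

theorem abstract_tsirelson {R : Type*} [Ring R] [Algebra ℝ R] (φ : R →ₗ[ℝ] ℝ)
    (A₀ A₁ B₀ B₁ : R)
    (c00 : B₀ * A₀ = A₀ * B₀) (c01 : B₁ * A₀ = A₀ * B₁)
    (c10 : B₀ * A₁ = A₁ * B₀) (c11 : B₁ * A₁ = A₁ * B₁)
    (hA0 : φ (A₀ * A₀) ≤ 1) (hA1 : φ (A₁ * A₁) ≤ 1)
    (hB0 : φ (B₀ * B₀) ≤ 1) (hB1 : φ (B₁ * B₁) ≤ 1)
    (hP : 0 ≤ φ ((A₀ + A₁ - √2 • B₀) * (A₀ + A₁ - √2 • B₀)))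
    (hQ : 0 ≤ φ ((A₀ - A₁ - √2 • B₁) * (A₀ - A₁ - √2 • B₁))) :
    φ (A₀ * B₀) + φ (A₀ * B₁) + φ (A₁ * B₀) - φ (A₁ * B₁) ≤ 2 * √2 := by
  simp only [sub_mul, mul_sub, add_mul, mul_add, mul_smul_comm, smul_mul_assoc, map_sub, map_add,
    map_smul, c00, c01, c10, c11, smul_eq_mul] at hP hQ
  have hs : √2 * √2 = 2 := Real.mul_self_sqrt (by norm_num)
  have hpos : 0 < √2 := by positivity
  rw [← mul_assoc, hs] at hP hQ
  refine le_of_mul_le_mul_left ?_ hpos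
  have : √2 * (2 * √2) = 4 := by linarith
  rw [this]
  linarith

theorem povm_sq {n : Type*} [Fintype n] [DecidableEq n] {X Y : Matrix n n ℂ}
    (hX : X.PosSemidef) (hY : Y.PosSemidef) (h : X + Y = 1) :
    (1 - (Y - X) * (Y - X)).PosSemidef := by
  have e : 1 - (Y - X) * (Y - X) = (4 : ℝ) • (X * Y * X + Y * X * Y) := by
    obtain rfl : Y = 1 - X := by rw [← h]; abel
    have : ∀ M : Matrix n n ℂ, (4 : ℝ) • M = 4 * M := by
      intro M; rw [Algebra.smul_def, map_ofNat]
    rw [this]; noncomm_ring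
  rw [e]
  have h1 : (X * Y * X).PosSemidef := by
    have := hY.mul_mul_conjTranspose_same X
    rwa [hX.1.eq] at this
  have h2 : (Y * X * Y).PosSemidef := by
    have := hX.mul_mul_conjTranspose_same Y
    rwa [hY.1.eq] at this
  exact (h1.add h2).smul (by norm_num)

/-- the Tsirelson bound `E(P) ≤ 2√2` for quantum tables. -/
theorem tsirelson_bound
    (P : Bool → Bool → Bool → Bool → ℝ) (hP : IsProbTable P)
    (hQ : IsQuantum P) : chsh P ≤ 2 * Real.sqrt 2 := by
  obtain ⟨dA, dB, -, -, ρ, E, F, hρ, htr, hE, hE1, hF, hF1, hPE⟩ := hQ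
  have hsq : ∀ M : Matrix (Fin dA × Fin dB) (Fin dA × Fin dB) ℂ, M.IsHermitian →
      0 ≤ stateFun ρ (M * M) := by
    intro M hM
    refine trace_mul_nonneg_aux hρ ?_
    have := Matrix.posSemidef_conjTranspose_mul_self M
    rwa [hM.eq] at this
  have hone : stateFun ρ 1 = 1 := by simp [stateFun, htr]
  have hle : ∀ M, (1 - M).PosSemidef → stateFun ρ M ≤ 1 := by
    intro M hM
    have h : 0 ≤ stateFun ρ (1 - M) := trace_mul_nonneg_aux hρ hM
    rw [map_sub, hone] at h
    linarith
  have hEh : ∀ x, (E x true - E x false).IsHermitian := fun x => (hE x _).1.sub (hE x _).1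
  have hFh : ∀ x, (F x true - F x false).IsHermitian := fun x => (hF x _).1.sub (hF x _).1
  let A : Bool → Matrix (Fin dA × Fin dB) (Fin dA × Fin dB) ℂ :=
    fun x => (E x true - E x false) ⊗ₖ 1
  let B : Bool → Matrix (Fin dA × Fin dB) (Fin dA × Fin dB) ℂ :=
    fun y => 1 ⊗ₖ (F y true - F y false)
  have hAh : ∀ x, (A x).IsHermitian := by
    intro x
    simp only [A, Matrix.IsHermitian, Matrix.conjTranspose_kronecker, (hEh x).eq,
      Matrix.conjTranspose_one]
  have hBh : ∀ x, (B x).IsHermitian := by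
    intro x
    simp only [B, Matrix.IsHermitian, Matrix.conjTranspose_kronecker, (hFh x).eq,
      Matrix.conjTranspose_one]
  have hAB : ∀ x y, A x * B y = (E x true - E x false) ⊗ₖ (F y true - F y false) := by
    intro x y
    simp only [A, B, ← Matrix.mul_kronecker_mul, mul_one, one_mul]
  have hcomm : ∀ x y, B y * A x = A x * B y := by
    intro x y
    simp only [A, B, ← Matrix.mul_kronecker_mul, mul_one, one_mul]
  have hA2 : ∀ x, stateFun ρ (A x * A x) ≤ 1 := by
    intro x
    refine hle _ ?_
    have h := (povm_sq (hE x false) (hE x true) (hE1 x)).kronecker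
      (Matrix.PosSemidef.one (n := Fin dB) (R := ℂ))
    rw [sub_kronecker_aux, Matrix.one_kronecker_one] at h
    simpa only [A, ← Matrix.mul_kronecker_mul, mul_one] using h
  have hB2 : ∀ x, stateFun ρ (B x * B x) ≤ 1 := by
    intro x
    refine hle _ ?_
    have h := (Matrix.PosSemidef.one (n := Fin dA) (R := ℂ)).kronecker
      (povm_sq (hF x false) (hF x true) (hF1 x))
    rw [kronecker_sub_aux, Matrix.one_kronecker_one] at h
    simpa only [B, ← Matrix.mul_kronecker_mul, mul_one] using h
  have hcor : ∀ x y, correlator P x y = stateFun ρ (A x * B y) := by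
    intro x y
    have hp : ∀ a b, P a b x y = stateFun ρ (E x a ⊗ₖ F y b) := by
      intro a b
      have := congrArg Complex.re (hPE a b x y)
      simpa [stateFun] using this
    rw [hAB, sub_kronecker_aux, kronecker_sub_aux, kronecker_sub_aux]
    simp only [map_sub, correlator, Fintype.sum_bool, hp, sgn]
    simp
    ring
  have hsm : ∀ y, (√2 • B y).IsHermitian := by
    intro y
    simp [Matrix.IsHermitian, Matrix.conjTranspose_smul, (hBh y).eq]
  unfold chsh
  simp only [hcor]
  exact abstract_tsirelson (stateFun ρ) _ _ _ _ (hcomm _ _) (hcomm _ _) (hcomm _ _) (hcomm _ _)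
    (hA2 _) (hA2 _) (hB2 _) (hB2 _)
    (hsq _ (((hAh _).add (hAh _)).sub (hsm _))) (hsq _ (((hAh _).sub (hAh _)).sub (hsm _)))
end

section
/- The Tsirelson bound is attained: there exists a quantum (2,2,2) probability table P with CHSH value E(P) = 2√2; in particular, since 2√2 > 2, there exists a quantum (2,2,2) probability table that is not classical. -/
open Kronecker
open scoped ComplexOrder

/-- The rank-one projector `(1 + c Z + s X) / 2`. -/
noncomputable def projCS (c s : ℝ) : Matrix (Fin 2) (Fin 2) ℂ :=
  !![(1 + (c : ℂ)) / 2, (s : ℂ) / 2; (s : ℂ) / 2, (1 - (c : ℂ)) / 2]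

/-- The maximally entangled two-qubit state. -/
noncomputable def bellState : Matrix (Fin 2 × Fin 2) (Fin 2 × Fin 2) ℂ :=
  fun p q => if p.1 = p.2 ∧ q.1 = q.2 then 1 / 2 else 0

theorem conj_two : (starRingEnd ℂ) 2 = 2 := map_ofNat _ 2

theorem projCS_posSemidef (c s : ℝ) (h : c ^ 2 + s ^ 2 = 1) : (projCS c s).PosSemidef := by
  have hC : (c : ℂ) ^ 2 + (s : ℂ) ^ 2 = 1 := by exact_mod_cast h
  have key : projCS c s = projCS c s * (projCS c s).conjTranspose := by
    ext i j
    fin_cases i <;> fin_cases j <;>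
      simp [projCS, Matrix.mul_apply, Fin.sum_univ_two, Matrix.conjTranspose_apply, conj_two] <;>
      first
        | ring1
        | linear_combination (-1 / 4) * hC
  rw [key]
  exact Matrix.posSemidef_self_mul_conjTranspose _

theorem bellState_posSemidef : bellState.PosSemidef := by
  have key : bellState = bellState * bellState.conjTranspose := by
    ext ⟨i, j⟩ ⟨k, l⟩
    fin_cases i <;> fin_cases j <;> fin_cases k <;> fin_cases l <;>
      simp [bellState, Matrix.mul_apply, Fintype.sum_prod_type, Fin.sum_univ_two,
        Matrix.conjTranspose_apply, conj_two]
  rw [key]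
  exact Matrix.posSemidef_self_mul_conjTranspose _

theorem bellState_trace : bellState.trace = 1 := by
  simp [bellState, Matrix.trace, Fintype.sum_prod_type]

theorem bellState_projCS (c s c' s' : ℝ) :
    (bellState * (projCS c s ⊗ₖ projCS c' s')).trace
      = ((1 + c * c' + s * s') / 4 : ℝ) := by
  simp [bellState, projCS, Matrix.trace, Matrix.mul_apply, Fintype.sum_prod_type,
    Fin.sum_univ_two]
  ring

/-- First Bloch coordinate of the observables of Alice. -/
noncomputable def alC (x : Bool) : ℝ := if x then 0 else 1
/-- Second Bloch coordinate of the observables of Alice. -/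
noncomputable def alS (x : Bool) : ℝ := if x then 1 else 0
/-- Second Bloch coordinate of the observables of Bob. -/
noncomputable def boS (y : Bool) : ℝ := if y then -(Real.sqrt 2 / 2) else Real.sqrt 2 / 2

/-- The table attaining the Tsirelson bound. -/
noncomputable def tsTable (a b x y : Bool) : ℝ :=
  (1 + (sgn a * alC x) * (sgn b * (Real.sqrt 2 / 2)) + (sgn a * alS x) * (sgn b * boS y)) / 4

theorem tsTable_prob : IsProbTable tsTable := by
  have h0 : 0 ≤ Real.sqrt 2 := Real.sqrt_nonneg 2
  have h1 : Real.sqrt 2 ≤ 2 := by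
    rw [Real.sqrt_le_left (by norm_num)]; norm_num
  constructor
  · intro a b x y
    cases a <;> cases b <;> cases x <;> cases y <;>
      simp [tsTable, sgn, alC, alS, boS] <;> linarith
  · intro x y
    simp [tsTable, sgn]
    ring

theorem projCS_add (c s : ℝ) :
    projCS (sgn false * c) (sgn false * s) + projCS (sgn true * c) (sgn true * s) = 1 := by
  ext i j
  fin_cases i <;> fin_cases j <;> simp [projCS, sgn] <;> ring

theorem sgn_sq (a : Bool) : sgn a ^ 2 = 1 := by
  cases a <;> simp [sgn]

theorem tsTable_quantum : IsQuantum tsTable := by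
  have h2 : Real.sqrt 2 ^ 2 = 2 := Real.sq_sqrt (by norm_num)
  refine ⟨2, 2, by norm_num, by norm_num, bellState,
    fun x a => projCS (sgn a * alC x) (sgn a * alS x),
    fun y b => projCS (sgn b * (Real.sqrt 2 / 2)) (sgn b * boS y),
    bellState_posSemidef, bellState_trace, ?_, fun x => projCS_add _ _, ?_,
    fun y => projCS_add _ _, ?_⟩
  · intro x a
    apply projCS_posSemidef
    rw [mul_pow, mul_pow, sgn_sq]
    cases x <;> simp [alC, alS]
  · intro y b
    apply projCS_posSemidef
    rw [mul_pow, mul_pow, sgn_sq]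
    cases y <;> simp [boS] <;> linarith
  · intro a b x y
    rw [bellState_projCS]
    rfl

theorem tsTable_chsh : chsh tsTable = 2 * Real.sqrt 2 := by
  simp [chsh, correlator, tsTable, sgn, alC, alS, boS]
  ring

theorem chsh_le_of_classical (P : Bool → Bool → Bool → Bool → ℝ) (h : IsClassical P) :
    chsh P ≤ 2 := by
  obtain ⟨n, -, q, PA, PB, hq, hq1, hA, hA1, hB, hB1, hP⟩ := h
  let u : Bool → Fin n → ℝ := fun x l => PA true x l - PA false x l
  let v : Bool → Fin n → ℝ := fun y l => PB true y l - PB false y l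
  have hc : ∀ x y, correlator P x y = ∑ l, q l * (u x l * v y l) := by
    intro x y
    simp only [correlator, hP, Fintype.sum_bool, Finset.mul_sum, ← Finset.sum_add_distrib]
    refine Finset.sum_congr rfl fun l _ => ?_
    simp [sgn, u, v]
    ring
  have hu : ∀ x l, -1 ≤ u x l ∧ u x l ≤ 1 := by
    intro x l
    have h1 := hA1 x l
    rw [Fintype.sum_bool] at h1
    have h2 := hA true x l
    have h3 := hA false x l
    constructor <;> simp only [u] <;> linarith
  have hv : ∀ x l, -1 ≤ v x l ∧ v x l ≤ 1 := by
    intro x l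
    have h1 := hB1 x l
    rw [Fintype.sum_bool] at h1
    have h2 := hB true x l
    have h3 := hB false x l
    constructor <;> simp only [v] <;> linarith
  have e : chsh P = ∑ l, q l * (u false l * (v false l + v true l)
      + u true l * (v false l - v true l)) := by
    simp only [chsh, hc, ← Finset.sum_add_distrib, ← Finset.sum_sub_distrib]
    exact Finset.sum_congr rfl fun l _ => by ring
  have hb : ∀ s t : ℝ, -1 ≤ s ∧ s ≤ 1 → s * t ≤ |t| := by
    intro s t hs
    calc s * t ≤ |s * t| := le_abs_self _
      _ = |s| * |t| := abs_mul _ _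
      _ ≤ 1 * |t| := mul_le_mul_of_nonneg_right (abs_le.mpr hs) (abs_nonneg t)
      _ = |t| := one_mul _
  rw [e]
  calc _ ≤ ∑ l, q l * 2 := by
        refine Finset.sum_le_sum fun l _ => mul_le_mul_of_nonneg_left ?_ (hq l)
        have h1 := hb _ (v false l + v true l) (hu false l)
        have h2 := hb _ (v false l - v true l) (hu true l)
        have h3 := hv false l
        have h4 := hv true l
        have h5 : |v false l + v true l| + |v false l - v true l| ≤ 2 := by
          rcases abs_cases (v false l + v true l) with h | h <;>
            rcases abs_cases (v false l - v true l) with h' | h' <;> linarith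
        linarith
    _ = 2 := by rw [← Finset.sum_mul, hq1, one_mul]

/-- the Tsirelson bound is attained by a quantum probability table, and
in particular (since `2√2 > 2`) there is a quantum table that is not classical. -/
theorem tsirelson_bound_attained :
    (∃ P : Bool → Bool → Bool → Bool → ℝ,
      IsProbTable P ∧ IsQuantum P ∧ chsh P = 2 * Real.sqrt 2) ∧
    (2 : ℝ) < 2 * Real.sqrt 2 ∧
    (∃ P : Bool → Bool → Bool → Bool → ℝ,
      IsProbTable P ∧ IsQuantum P ∧ ¬ IsClassical P) := by
  have hlt : (2 : ℝ) < 2 * Real.sqrt 2 := by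
    have : (1 : ℝ) < Real.sqrt 2 := by
      rw [Real.lt_sqrt (by norm_num)]; norm_num
    linarith
  refine ⟨⟨tsTable, tsTable_prob, tsTable_quantum, tsTable_chsh⟩, hlt,
    ⟨tsTable, tsTable_prob, tsTable_quantum, fun h => ?_⟩⟩
  have := chsh_le_of_classical _ h
  rw [tsTable_chsh] at this
  linarith
end

section
/- Quantum theory has no third-order interference: let ρ be an N×N complex density matrix, Q an N×N Hermitian matrix with 0 ≤ Q ≤ 𝟙 (i.e. Q and 𝟙−Q positive semidefinite), and π_1, π_2, π_3 pairwise orthogonal projections (π_i² = π_i = π_i†, π_i π_j = 0 for i ≠ j). For a nonempty subset I ⊆ {1,2,3}, set π_I := Σ_{i∈I} π_i and P_I := tr(π_I ρ π_I Q). Then P_{123} = P_{12} + P_{13} + P_{23} − P_1 − P_2 − P_3. -/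
open scoped ComplexOrder

/-- The probability `P_I = tr(π_I ρ π_I Q)` of the detector click when (only) the
slits in `I ⊆ {1,2,3}` are open, where `π_I = Σ_{i∈I} π_i`. -/
noncomputable def slitProb {N : ℕ} (ρ Q : Matrix (Fin N) (Fin N) ℂ)
    (π : Fin 3 → Matrix (Fin N) (Fin N) ℂ) (I : Finset (Fin 3)) : ℂ :=
  ((∑ i ∈ I, π i) * ρ * (∑ i ∈ I, π i) * Q).trace

/-- quantum theory has no third-order interference: for a density
matrix `ρ`, an effect `0 ≤ Q ≤ 𝟙`, and pairwise orthogonal projections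
`π_1, π_2, π_3`, we have `P_{123} = P_{12} + P_{13} + P_{23} − P_1 − P_2 − P_3`. -/
theorem no_third_order_interference {N : ℕ}
    (ρ Q : Matrix (Fin N) (Fin N) ℂ) (π : Fin 3 → Matrix (Fin N) (Fin N) ℂ)
    (hρ : ρ.PosSemidef) (hρtr : ρ.trace = 1)
    (hQ : Q.PosSemidef) (hQ1 : (1 - Q).PosSemidef)
    (hproj : ∀ i, (π i).IsHermitian ∧ π i * π i = π i)
    (horth : ∀ i j, i ≠ j → π i * π j = 0) :
    slitProb ρ Q π {0, 1, 2} =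
      slitProb ρ Q π {0, 1} + slitProb ρ Q π {0, 2} + slitProb ρ Q π {1, 2}
        - slitProb ρ Q π {0} - slitProb ρ Q π {1} - slitProb ρ Q π {2} := by
  have h3 : ∑ i ∈ ({0, 1, 2} : Finset (Fin 3)), π i = π 0 + (π 1 + π 2) := by
    rw [Finset.sum_insert (by decide), Finset.sum_pair (by decide)]
  have h01 : ∑ i ∈ ({0, 1} : Finset (Fin 3)), π i = π 0 + π 1 :=
    Finset.sum_pair (by decide)
  have h02 : ∑ i ∈ ({0, 2} : Finset (Fin 3)), π i = π 0 + π 2 :=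
    Finset.sum_pair (by decide)
  have h12 : ∑ i ∈ ({1, 2} : Finset (Fin 3)), π i = π 1 + π 2 :=
    Finset.sum_pair (by decide)
  unfold slitProb
  rw [h3, h01, h02, h12]
  simp only [Finset.sum_singleton, add_mul, mul_add, Matrix.trace_add]
  ring
end
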